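/- arXiv:1006.4120 — 2 statements merged into one kernel-verified Lean document; each statement's English description precedes it below -/
import Mathlib

section
/- Under the Fock-vacuum assumptions, for all integers m ≥ 1 and 0 ≤ n ≤ p: if m is even then b⁻·|m,n,α⟩ = (-1)ⁿ m |m-1,n,α⟩ + 2(-1)^(n+1) n m |m-1,n,β⟩, and if m is odd then b⁻·|m,n,α⟩ = (-1)^(n+1)(2n - m - (p-1)) |m-1,n,α⟩ + 2(-1)^(n+1) n (m-1) |m-1,n,β⟩. -/
noncomputable section

/-- The commutator `[x, y] = x*y - y*x`. -/
def pbComm {A : Type*} [Ring A] (x y : A) : A := x * y - y * x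

/-- The anticommutator `{x, y} = x*y + y*x`. -/
def pbAcomm {A : Type*} [Ring A] (x y : A) : A := x * y + y * x

/-- The defining trilinear relations of the Relative Parabose Set algebra
`P_BF^(1,1)` on generators `bp = b⁺`, `bm = b⁻`, `fp = f⁺`, `fm = f⁻`. -/
def PBFRels {A : Type*} [Ring A] (bp bm fp fm : A) : Prop :=
  pbComm (pbAcomm bp bp) fm = 0 ∧
  pbComm (pbComm fp fm) bm = 0 ∧
  pbComm (pbAcomm bp bp) fp = 0 ∧
  pbComm (pbAcomm bm bm) fp = 0 ∧
  pbComm (pbAcomm bm bm) fm = 0 ∧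
  pbComm (pbAcomm bp bm) fm = 0 ∧
  pbComm (pbAcomm fm bm) bm = 0 ∧
  pbComm (pbAcomm fm bp) bp = 0 ∧
  pbComm (pbAcomm fm bp) bm = -(2 * fm) ∧
  pbAcomm (pbAcomm bm fp) fm = 2 * bm ∧
  pbComm (pbAcomm fp bp) bp = 0 ∧
  pbComm (pbAcomm fp bm) bm = 0 ∧
  pbComm (pbAcomm bm fm) bp = 2 * fm ∧
  pbAcomm (pbAcomm fm bm) fp = 2 * bm ∧
  pbAcomm (pbAcomm bm fm) fm = 0 ∧
  pbAcomm (pbAcomm bm fp) fp = 0 ∧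
  pbComm (pbAcomm bm bp) fp = 0 ∧
  pbComm (pbComm fm fp) bp = 0 ∧
  pbAcomm (pbAcomm bp fp) fp = 0 ∧
  pbAcomm (pbAcomm bp fm) fm = 0 ∧
  pbComm (pbAcomm fp bm) bp = 2 * fp ∧
  pbComm (pbAcomm bp fp) bm = -(2 * fp) ∧
  pbAcomm (pbAcomm bp fm) fp = 2 * bp ∧
  pbAcomm (pbAcomm fp bp) fm = 2 * bp ∧
  pbComm bm (pbAcomm bp bm) = 2 * bm ∧
  pbComm bp (pbAcomm bp bp) = 0 ∧
  pbComm bp (pbAcomm bm bm) = -(4 * bm) ∧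
  pbComm fm (pbComm fp fm) = 2 * fm ∧
  pbComm bm (pbAcomm bm bm) = 0 ∧
  pbComm bm (pbAcomm bp bp) = 4 * bp ∧
  pbComm bp (pbAcomm bm bp) = -(2 * bp) ∧
  pbComm fp (pbComm fm fp) = 2 * fp

/-- `R⁺ = (1/2)(b⁺f⁺ + f⁺b⁺)` as a linear operator. -/
def Rplus {V : Type*} [AddCommGroup V] [Module ℂ V] (bp fp : Module.End ℂ V) :
    Module.End ℂ V := (2 : ℂ)⁻¹ • (bp * fp + fp * bp)

/-- The vector `|m, n, α⟩ = (f⁺)ⁿ (b⁺)ᵐ |0⟩`. -/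
def vA {V : Type*} [AddCommGroup V] [Module ℂ V] (bp fp : Module.End ℂ V)
    (vac : V) (m n : ℕ) : V := (fp ^ n * bp ^ m) vac

/-- The vector `|m, n, β⟩ = (f⁺)^(n-1) (b⁺)^(m-1) R⁺ |0⟩`, set to `0` when
`m = 0` or `n = 0`. -/
def vB {V : Type*} [AddCommGroup V] [Module ℂ V] (bp fp : Module.End ℂ V)
    (vac : V) (m n : ℕ) : V :=
  if m = 0 ∨ n = 0 then 0 else (fp ^ (n - 1) * bp ^ (m - 1) * Rplus bp fp) vac

/-!
The anticommutator `{b⁻, f⁺}` anticommutes with `f⁺`, so moving `b⁻` through `(f⁺)ⁿ` produces, up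
to sign, a single correction `n (f⁺)ⁿ⁻¹ {b⁻, f⁺}`. The commutators of `b⁻` and of `{b⁻, f⁺}` with
`(b⁺)²` are `2b⁺` and `2{b⁺, f⁺} = 4R⁺`, which commute with `(b⁺)²`; hence both operators move
through even powers of `b⁺` like derivations, and an odd power leaves one more `b⁺` to be moved past
by hand. At the vacuum both `b⁻` and `{b⁻, f⁺}` vanish.
-/

theorem mul_pow_of_skew_commute {R A : Type*} [CommSemiring R] [Semiring A] [Algebra R A] {ε : R}
    {x c d : A} (hx : x * c = ε • (c * x) + d) (hd : d * c = ε • (c * d)) (n : ℕ) :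
    x * c ^ n = ε ^ n • (c ^ n * x) + (n * ε ^ (n - 1)) • (c ^ (n - 1) * d) := by
  induction n with
  | zero => simp
  | succ n ih =>
    have hdc : ((n : R) * ε ^ (n - 1)) • (c ^ (n - 1) * d * c) = (n * ε ^ n) • (c ^ n * d) := by
      cases n with
      | zero => simp
      | succ n =>
        simp only [Nat.add_sub_cancel, mul_assoc, hd, mul_smul_comm, smul_smul, pow_succ]
    calc x * c ^ (n + 1)
        = (ε ^ n • (c ^ n * x) + (n * ε ^ (n - 1)) • (c ^ (n - 1) * d)) * c := by
          rw [pow_succ, ← mul_assoc, ih]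
      _ = ε ^ n • (c ^ n * (x * c)) + (n * ε ^ (n - 1)) • (c ^ (n - 1) * d * c) := by
          simp only [add_mul, smul_mul_assoc, mul_assoc]
      _ = ε ^ (n + 1) • (c ^ (n + 1) * x)
            + ((n + 1 : ℕ) * ε ^ (n + 1 - 1)) • (c ^ (n + 1 - 1) * d) := by
          rw [hx, hdc, mul_add, mul_smul_comm, ← mul_assoc, Nat.add_sub_cancel, pow_succ c]
          push_cast
          module

section Ring

variable {A : Type*} [Ring A]

theorem mul_pow_of_pbComm_eq {x c d : A} (hx : pbComm x c = d) (hd : Commute d c) (n : ℕ) :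
    x * c ^ n = c ^ n * x + n • (c ^ (n - 1) * d) := by
  have hx' : x * c = (1 : ℕ) • (c * x) + d := by rw [← hx, pbComm, one_smul, add_sub_cancel]
  simpa using mul_pow_of_skew_commute hx' (by rw [one_smul, hd.eq]) n

theorem mul_pow_of_pbAcomm_pbAcomm_eq_zero {x c : A} (h : pbAcomm (pbAcomm x c) c = 0) (n : ℕ) :
    x * c ^ n = (-1 : ℤ) ^ n • (c ^ n * x - n • (c ^ (n - 1) * pbAcomm x c)) := by
  have hx : x * c = (-1 : ℤ) • (c * x) + pbAcomm x c := by
    rw [neg_one_smul, pbAcomm, neg_add_cancel_comm_assoc]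
  have hd : pbAcomm x c * c = (-1 : ℤ) • (c * pbAcomm x c) := by
    rw [neg_one_smul, eq_neg_of_add_eq_zero_left h]
  rw [mul_pow_of_skew_commute hx hd]
  cases n with
  | zero => simp
  | succ n =>
    rw [Nat.add_sub_cancel, pow_succ (-1 : ℤ)]
    module

/-- The relations of `P_BF^(1,1)` that govern moving `b⁻` to the right through words in `b⁺` and
`f⁺`. They are chosen so that no factor `2` has to be cancelled; for instance
`[{f⁺, b⁺}, b⁺] = 0` says precisely that `(b⁺)²` and `f⁺` commute. -/
structure RaisingRels (bp bm fp : A) : Prop where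
  pbComm_pbAcomm_fp_bp_bp : pbComm (pbAcomm fp bp) bp = 0
  pbAcomm_pbAcomm_bm_fp_fp : pbAcomm (pbAcomm bm fp) fp = 0
  pbComm_pbAcomm_fp_bm_bp : pbComm (pbAcomm fp bm) bp = 2 * fp
  pbComm_bp_pbAcomm_bm_bp : pbComm bp (pbAcomm bm bp) = -(2 * bp)

theorem PBFRels.raisingRels {bp bm fp fm : A} (h : PBFRels bp bm fp fm) :
    RaisingRels bp bm fp := by
  obtain ⟨-, -, -, -, -, -, -, -, -, -, hfp_bp, -, -, -, -, hbm_fp, -, -, -, -, hfp_bm,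
    -, -, -, -, -, -, -, -, -, hbm_bp, -⟩ := h
  exact ⟨hfp_bp, hbm_fp, hfp_bm, hbm_bp⟩

namespace RaisingRels

variable {bp bm fp : A}

theorem commute_bp_sq_fp (h : RaisingRels bp bm fp) : Commute (bp ^ 2) fp := by
  have expand : pbComm (pbAcomm fp bp) bp = fp * bp ^ 2 - bp ^ 2 * fp := by
    simp only [pbComm, pbAcomm]
    noncomm_ring
  exact (sub_eq_zero.mp (expand.symm.trans h.pbComm_pbAcomm_fp_bp_bp)).symm

theorem commute_pbAcomm_bp_fp_bp (h : RaisingRels bp bm fp) : Commute (pbAcomm bp fp) bp := by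
  have := sub_eq_zero.mp h.pbComm_pbAcomm_fp_bp_bp
  rwa [pbAcomm, add_comm] at this

theorem pbComm_bm_bp_sq (h : RaisingRels bp bm fp) : pbComm bm (bp ^ 2) = 2 • bp := by
  have expand : pbComm bm (bp ^ 2) = -pbComm bp (pbAcomm bm bp) := by
    simp only [pbComm, pbAcomm]
    noncomm_ring
  rw [expand, h.pbComm_bp_pbAcomm_bm_bp, neg_neg, nsmul_eq_mul, Nat.cast_ofNat]

theorem pbComm_pbAcomm_bm_fp_bp (h : RaisingRels bp bm fp) :
    pbComm (pbAcomm bm fp) bp = 2 • fp := by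
  rw [pbAcomm, add_comm, ← pbAcomm, h.pbComm_pbAcomm_fp_bm_bp, nsmul_eq_mul, Nat.cast_ofNat]

theorem pbComm_pbAcomm_bm_fp_bp_sq (h : RaisingRels bp bm fp) :
    pbComm (pbAcomm bm fp) (bp ^ 2) = 2 • pbAcomm bp fp := by
  have leibniz (x : A) : pbComm x (bp ^ 2) = pbComm x bp * bp + bp * pbComm x bp := by
    simp only [pbComm]
    noncomm_ring
  rw [leibniz, h.pbComm_pbAcomm_bm_fp_bp, pbAcomm, smul_mul_assoc, mul_smul_comm, ← smul_add,
    add_comm]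

theorem bm_mul_bp_pow_even (h : RaisingRels bp bm fp) (k : ℕ) :
    bm * bp ^ (2 * k) = bp ^ (2 * k) * bm + (2 * k) • bp ^ (2 * k - 1) := by
  have hd : Commute (2 • bp) (bp ^ 2) := ((Commute.refl bp).pow_right 2).smul_left 2
  rw [pow_mul, mul_pow_of_pbComm_eq h.pbComm_bm_bp_sq hd, mul_smul_comm, smul_smul, mul_comm k 2]
  cases k with
  | zero => simp
  | succ k => rw [Nat.add_sub_cancel, ← pow_mul, ← pow_mul, ← pow_succ]; rfl

theorem pbAcomm_bm_fp_mul_bp_pow_even (h : RaisingRels bp bm fp) (k : ℕ) :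
    pbAcomm bm fp * bp ^ (2 * k) =
      bp ^ (2 * k) * pbAcomm bm fp + (2 * k) • (bp ^ (2 * k - 2) * pbAcomm bp fp) := by
  have hd : Commute (2 • pbAcomm bp fp) (bp ^ 2) :=
    (h.commute_pbAcomm_bp_fp_bp.pow_right 2).smul_left 2
  rw [pow_mul, mul_pow_of_pbComm_eq h.pbComm_pbAcomm_bm_fp_bp_sq hd, mul_smul_comm, smul_smul,
    mul_comm k 2, ← pow_mul, ← pow_mul, Nat.mul_sub_one]

theorem pbAcomm_bm_fp_mul_bp_pow_odd (h : RaisingRels bp bm fp) (k : ℕ) :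
    pbAcomm bm fp * bp ^ (2 * k + 1) =
      bp ^ (2 * k + 1) * pbAcomm bm fp + 2 • (fp * bp ^ (2 * k))
        + (2 * k) • (bp ^ (2 * k - 1) * pbAcomm bp fp) := by
  have hbp : pbAcomm bm fp * bp = bp * pbAcomm bm fp + 2 • fp := by
    rw [← h.pbComm_pbAcomm_bm_fp_bp, pbComm, add_sub_cancel]
  have hfp : bp ^ (2 * k) * fp = fp * bp ^ (2 * k) := by
    rw [pow_mul]
    exact h.commute_bp_sq_fp.pow_left k
  have hbp_acomm : (2 * k) • (bp ^ (2 * k - 2) * pbAcomm bp fp * bp) =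
      (2 * k) • (bp ^ (2 * k - 1) * pbAcomm bp fp) := by
    cases k with
    | zero => simp
    | succ k =>
      rw [mul_assoc, h.commute_pbAcomm_bp_fp_bp.eq, ← mul_assoc, ← pow_succ]
      rfl
  calc pbAcomm bm fp * bp ^ (2 * k + 1)
      = bp ^ (2 * k) * (pbAcomm bm fp * bp)
          + (2 * k) • (bp ^ (2 * k - 2) * pbAcomm bp fp * bp) := by
        rw [pow_succ, ← mul_assoc, h.pbAcomm_bm_fp_mul_bp_pow_even, add_mul, mul_assoc,
          smul_mul_assoc]
    _ = bp ^ (2 * k + 1) * pbAcomm bm fp + 2 • (fp * bp ^ (2 * k))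
          + (2 * k) • (bp ^ (2 * k - 1) * pbAcomm bp fp) := by
        rw [hbp, hbp_acomm, mul_add, mul_smul_comm, hfp, ← mul_assoc, ← pow_succ]

end RaisingRels

end Ring

section Vacuum

variable {R V : Type*} [CommRing R] [AddCommGroup V] [Module R V] {bp bm fp : Module.End R V}
  {vac : V}

theorem pbAcomm_apply_eq_zero {x y : Module.End R V} {v : V} (hx : x v = 0) (hxy : x (y v) = 0) :
    pbAcomm x y v = 0 := by
  simp [pbAcomm, hx, hxy]

namespace RaisingRels

theorem bm_fp_pow_apply (h : RaisingRels bp bm fp) (n : ℕ) (v : V) :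
    bm ((fp ^ n) v) =
      (-1 : ℤ) ^ n • ((fp ^ n) (bm v) - n • (fp ^ (n - 1)) (pbAcomm bm fp v)) :=
  LinearMap.congr_fun (mul_pow_of_pbAcomm_pbAcomm_eq_zero h.pbAcomm_pbAcomm_bm_fp_fp n) v

theorem bm_bp_pow_even_vacuum (h : RaisingRels bp bm fp) (hb0 : bm vac = 0) (k : ℕ) :
    bm ((bp ^ (2 * k)) vac) = (2 * k) • (bp ^ (2 * k - 1)) vac := by
  simpa only [Module.End.mul_apply, LinearMap.add_apply, LinearMap.smul_apply, hb0, map_zero,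
    zero_add] using LinearMap.congr_fun (h.bm_mul_bp_pow_even k) vac

theorem bm_bp_pow_odd_vacuum (h : RaisingRels bp bm fp) {c : R} (hbb : bm (bp vac) = c • vac)
    (k : ℕ) : bm ((bp ^ (2 * k + 1)) vac) = (2 * k + c) • (bp ^ (2 * k)) vac := by
  have hpow : (2 * k) • (bp ^ (2 * k - 1)) (bp vac) = (2 * k) • (bp ^ (2 * k)) vac := by
    cases k with
    | zero => simp
    | succ k => rw [← Module.End.mul_apply, ← pow_succ]; rfl
  calc bm ((bp ^ (2 * k + 1)) vac)
      = (bp ^ (2 * k)) (bm (bp vac)) + (2 * k) • (bp ^ (2 * k - 1)) (bp vac) := by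
        rw [pow_succ]
        exact LinearMap.congr_fun (h.bm_mul_bp_pow_even k) (bp vac)
    _ = (2 * k + c) • (bp ^ (2 * k)) vac := by
        rw [hbb, hpow, map_smul]
        module

theorem pbAcomm_bm_fp_bp_pow_even_vacuum (h : RaisingRels bp bm fp) (hb0 : bm vac = 0)
    (hbf : bm (fp vac) = 0) (k : ℕ) :
    pbAcomm bm fp ((bp ^ (2 * k)) vac) =
      (2 * k) • (bp ^ (2 * k - 2)) (pbAcomm bp fp vac) := by
  simpa only [Module.End.mul_apply, LinearMap.add_apply, LinearMap.smul_apply,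
    pbAcomm_apply_eq_zero hb0 hbf, map_zero, zero_add]
    using LinearMap.congr_fun (h.pbAcomm_bm_fp_mul_bp_pow_even k) vac

theorem pbAcomm_bm_fp_bp_pow_odd_vacuum (h : RaisingRels bp bm fp) (hb0 : bm vac = 0)
    (hbf : bm (fp vac) = 0) (k : ℕ) :
    pbAcomm bm fp ((bp ^ (2 * k + 1)) vac) =
      2 • fp ((bp ^ (2 * k)) vac) + (2 * k) • (bp ^ (2 * k - 1)) (pbAcomm bp fp vac) := by
  simpa only [Module.End.mul_apply, LinearMap.add_apply, LinearMap.smul_apply,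
    pbAcomm_apply_eq_zero hb0 hbf, map_zero, zero_add]
    using LinearMap.congr_fun (h.pbAcomm_bm_fp_mul_bp_pow_odd k) vac

end RaisingRels

end Vacuum

section Fock

variable {V : Type*} [AddCommGroup V] [Module ℂ V] {bp bm fp : Module.End ℂ V} {vac : V}

theorem vA_apply (m n : ℕ) : vA bp fp vac m n = (fp ^ n) ((bp ^ m) vac) := rfl

theorem two_mul_nsmul_vB_succ (m n : ℕ) :
    (2 * n) • vB bp fp vac (m + 1) n = n • (fp ^ (n - 1)) ((bp ^ m) (pbAcomm bp fp vac)) := by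
  cases n with
  | zero => simp
  | succ n =>
    have hvB : vB bp fp vac (m + 1) (n + 1) =
        (2 : ℂ)⁻¹ • (fp ^ n) ((bp ^ m) (pbAcomm bp fp vac)) := by
      simp [vB, Rplus, pbAcomm]
    rw [hvB, Nat.add_sub_cancel]
    module

namespace RaisingRels

theorem bm_vA_even (h : RaisingRels bp bm fp) (hb0 : bm vac = 0) (hbf : bm (fp vac) = 0)
    (k n : ℕ) :
    bm (vA bp fp vac (2 * k) n) = (-1 : ℤ) ^ n • (2 * k) •
      (vA bp fp vac (2 * k - 1) n - (2 * n) • vB bp fp vac (2 * k - 1) n) := by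
  have hvB : (2 * k) • n • (fp ^ (n - 1)) ((bp ^ (2 * k - 2)) (pbAcomm bp fp vac)) =
      (2 * k) • (2 * n) • vB bp fp vac (2 * k - 1) n := by
    cases k with
    | zero => simp
    | succ k => rw [← two_mul_nsmul_vB_succ]; rfl
  rw [vA_apply, h.bm_fp_pow_apply, h.bm_bp_pow_even_vacuum hb0,
    h.pbAcomm_bm_fp_bp_pow_even_vacuum hb0 hbf, map_nsmul, map_nsmul, smul_comm n, hvB, ← vA_apply,
    smul_sub (2 * k)]

theorem bm_vA_odd (h : RaisingRels bp bm fp) (hb0 : bm vac = 0) (hbf : bm (fp vac) = 0) {c : ℂ}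
    (hbb : bm (bp vac) = c • vac) (k n : ℕ) :
    bm (vA bp fp vac (2 * k + 1) n) = (-1 : ℤ) ^ n •
      ((2 * k + c - 2 * n) • vA bp fp vac (2 * k) n
        - (2 * k) • (2 * n) • vB bp fp vac (2 * k) n) := by
  have hvA : n • (fp ^ (n - 1)) (fp ((bp ^ (2 * k)) vac)) = n • vA bp fp vac (2 * k) n := by
    cases n with
    | zero => simp
    | succ n => rw [← Module.End.mul_apply, ← pow_succ]; rfl
  have hvB : (2 * k) • n • (fp ^ (n - 1)) ((bp ^ (2 * k - 1)) (pbAcomm bp fp vac)) =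
      (2 * k) • (2 * n) • vB bp fp vac (2 * k) n := by
    cases k with
    | zero => simp
    | succ k => rw [← two_mul_nsmul_vB_succ]; rfl
  rw [vA_apply, h.bm_fp_pow_apply, h.bm_bp_pow_odd_vacuum hbb,
    h.pbAcomm_bm_fp_bp_pow_odd_vacuum hb0 hbf, map_smul, map_add, map_nsmul, map_nsmul,
    smul_add, smul_comm n 2, smul_comm n (2 * k), hvA, hvB, ← vA_apply]
  module

end RaisingRels

theorem bm_action_alpha_general (hrel : RaisingRels bp bm fp) (hb0 : bm vac = 0)
    (hbf : bm (fp vac) = 0) {c : ℂ} (hbb : bm (bp vac) = c • vac) (m n : ℕ) :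
    (Even m → bm (vA bp fp vac m n)
      = ((-1 : ℂ) ^ n * (m : ℂ)) • vA bp fp vac (m - 1) n
        + (2 * (-1 : ℂ) ^ (n + 1) * (n : ℂ) * (m : ℂ)) • vB bp fp vac (m - 1) n) ∧
    (Odd m → bm (vA bp fp vac m n)
      = ((-1 : ℂ) ^ (n + 1) * (2 * (n : ℂ) - (m : ℂ) - (c - 1))) • vA bp fp vac (m - 1) n
        + (2 * (-1 : ℂ) ^ (n + 1) * (n : ℂ) * ((m : ℂ) - 1)) • vB bp fp vac (m - 1) n) := by
  constructor
  · rintro ⟨k, rfl⟩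
    rw [← two_mul, hrel.bm_vA_even hb0 hbf]
    module
  · rintro ⟨k, rfl⟩
    rw [Nat.add_sub_cancel, hrel.bm_vA_odd hb0 hbf hbb]
    push_cast
    module

end Fock

theorem bm_action_alpha {V : Type*} [AddCommGroup V] [Module ℂ V]
    (p : ℕ) (hp : 0 < p)
    (bp bm fp fm : Module.End ℂ V) (hrel : PBFRels bp bm fp fm)
    (vac : V) (hb0 : bm vac = 0) (hf0 : fm vac = 0)
    (hbb : bm (bp vac) = (p : ℂ) • vac) (hff : fm (fp vac) = (p : ℂ) • vac)
    (hbf : bm (fp vac) = 0) (hfb : fm (bp vac) = 0)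
    (m n : ℕ) (hm : 1 ≤ m) (hn : n ≤ p) :
    (Even m → bm (vA bp fp vac m n)
      = ((-1 : ℂ) ^ n * (m : ℂ)) • vA bp fp vac (m - 1) n
        + (2 * (-1 : ℂ) ^ (n + 1) * (n : ℂ) * (m : ℂ)) • vB bp fp vac (m - 1) n) ∧
    (Odd m → bm (vA bp fp vac m n)
      = ((-1 : ℂ) ^ (n + 1) * (2 * (n : ℂ) - (m : ℂ) - ((p : ℂ) - 1))) • vA bp fp vac (m - 1) n
        + (2 * (-1 : ℂ) ^ (n + 1) * (n : ℂ) * ((m : ℂ) - 1)) • vB bp fp vac (m - 1) n) :=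
  bm_action_alpha_general hrel.raisingRels hb0 hbf hbb m n
end
end

section
/- Under the Fock-vacuum assumptions, for all integers m ≥ 1 and 1 ≤ n ≤ p: b⁺·|m,n,β⟩ = (-1)^(n-1) |m+1,n,β⟩. -/
noncomputable section

/-!
Let `S = {b⁺, f⁺} = 2R⁺`. The relations `[S, b⁺] = 0` and `{S, f⁺} = 0` make `S` anticommute with
each of `b⁺f⁺` and `f⁺b⁺`, hence with their sum, which is `S` itself; so `S² = 0`. Therefore `S`
kills `(f⁺)ᵏ(b⁺)ʲR⁺`, and on such elements `b⁺f⁺ = S - f⁺b⁺` reduces to `-f⁺b⁺`: moving `b⁺` past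
each factor `f⁺` costs one sign.
-/

section Ring

variable {A : Type*} [Ring A] {b f x y : A}

theorem pbComm_eq_zero_iff_commute : pbComm x y = 0 ↔ Commute x y :=
  sub_eq_zero

theorem pbAcomm_eq_zero_iff_semiconjBy : pbAcomm x y = 0 ↔ SemiconjBy x y (-y) := by
  rw [pbAcomm, SemiconjBy, neg_mul, eq_neg_iff_add_eq_zero]

theorem pbAcomm_comm (x y : A) : pbAcomm x y = pbAcomm y x :=
  add_comm _ _

theorem semiconjBy_pbAcomm_neg {s : A} (hb : Commute s b) (hf : SemiconjBy s f (-f)) :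
    SemiconjBy s (pbAcomm b f) (-pbAcomm b f) := by
  have hbf : SemiconjBy s (b * f) (-(b * f)) := by simpa using hb.semiconjBy.mul_right hf
  have hfb : SemiconjBy s (f * b) (-(f * b)) := by simpa using hf.mul_right hb
  simpa only [pbAcomm, neg_add] using hbf.add_right hfb

theorem pbAcomm_mul_self_eq_zero [IsAddTorsionFree A] (hb : Commute (pbAcomm b f) b)
    (hf : SemiconjBy (pbAcomm b f) f (-f)) : pbAcomm b f * pbAcomm b f = 0 := by
  simpa only [SemiconjBy, neg_mul, self_eq_neg] using semiconjBy_pbAcomm_neg hb hf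

theorem mul_mul_of_pbAcomm_mul_eq_zero (hx : pbAcomm b f * x = 0) : b * (f * x) = -f * (b * x) := by
  rw [pbAcomm, add_mul, mul_assoc, mul_assoc] at hx
  rw [neg_mul, eq_neg_of_add_eq_zero_left hx]

theorem mul_pow_mul_of_pbAcomm_mul_eq_zero (hf : SemiconjBy (pbAcomm b f) f (-f))
    (hx : pbAcomm b f * x = 0) (k : ℕ) : b * (f ^ k * x) = (-f) ^ k * (b * x) := by
  induction k with
  | zero => simp only [pow_zero, one_mul]
  | succ k ih =>
    have hkx : pbAcomm b f * (f ^ k * x) = 0 := by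
      rw [← mul_assoc, (hf.pow_right k).eq, mul_assoc, hx, mul_zero]
    calc b * (f ^ (k + 1) * x) = b * (f * (f ^ k * x)) := by rw [pow_succ', mul_assoc]
      _ = -f * (b * (f ^ k * x)) := mul_mul_of_pbAcomm_mul_eq_zero hkx
      _ = (-f) ^ (k + 1) * (b * x) := by rw [ih, pow_succ' (-f), mul_assoc]

end Ring

section Module

variable {V : Type*} [AddCommGroup V] [Module ℂ V] {b f : Module.End ℂ V}

theorem pbAcomm_mul_pow_mul_Rplus_eq_zero (hb : Commute (pbAcomm b f) b)
    (hf : SemiconjBy (pbAcomm b f) f (-f)) (j : ℕ) :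
    pbAcomm b f * (b ^ j * Rplus b f) = 0 := by
  have : IsAddTorsionFree (Module.End ℂ V) := .of_isTorsionFree ℂ _
  have hR : Rplus b f = (2 : ℂ)⁻¹ • pbAcomm b f := rfl
  rw [← mul_assoc, (hb.pow_right j).eq, mul_assoc, hR, mul_smul_comm,
    pbAcomm_mul_self_eq_zero hb hf, smul_zero, mul_zero]

theorem vB_succ_succ (b f : Module.End ℂ V) (v : V) (m n : ℕ) :
    vB b f v (m + 1) (n + 1) = (f ^ n * (b ^ m * Rplus b f)) v := by
  simp [vB, mul_assoc]

theorem bp_action_beta_general (hb : pbComm (pbAcomm f b) b = 0)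
    (hf : pbAcomm (pbAcomm b f) f = 0) (v : V) {m n : ℕ} (hm : 1 ≤ m) (hn : 1 ≤ n) :
    b (vB b f v m n) = ((-1 : ℂ) ^ (n - 1)) • vB b f v (m + 1) n := by
  rw [pbAcomm_comm, pbComm_eq_zero_iff_commute] at hb
  rw [pbAcomm_eq_zero_iff_semiconjBy] at hf
  obtain ⟨j, rfl⟩ := Nat.exists_eq_add_of_le' hm
  obtain ⟨k, rfl⟩ := Nat.exists_eq_add_of_le' hn
  have hbR : pbAcomm b f * (b ^ j * Rplus b f) = 0 := pbAcomm_mul_pow_mul_Rplus_eq_zero hb hf j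
  have key : b * (f ^ k * (b ^ j * Rplus b f)) =
      (-1 : ℂ) ^ k • (f ^ k * (b ^ (j + 1) * Rplus b f)) := by
    rw [mul_pow_mul_of_pbAcomm_mul_eq_zero hf hbR, ← neg_one_smul ℂ f, smul_pow, smul_mul_assoc,
      ← mul_assoc b, ← pow_succ']
  simpa only [vB_succ_succ, Nat.add_sub_cancel, Module.End.mul_apply, LinearMap.smul_apply] using
    LinearMap.congr_fun key v

end Module

theorem bp_action_beta {V : Type*} [AddCommGroup V] [Module ℂ V]
    (p : ℕ) (hp : 0 < p)
    (bp bm fp fm : Module.End ℂ V) (hrel : PBFRels bp bm fp fm)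
    (vac : V) (hb0 : bm vac = 0) (hf0 : fm vac = 0)
    (hbb : bm (bp vac) = (p : ℂ) • vac) (hff : fm (fp vac) = (p : ℂ) • vac)
    (hbf : bm (fp vac) = 0) (hfb : fm (bp vac) = 0)
    (m n : ℕ) (hm : 1 ≤ m) (hn1 : 1 ≤ n) (hn : n ≤ p) :
    bp (vB bp fp vac m n) = ((-1 : ℂ) ^ (n - 1)) • vB bp fp vac (m + 1) n := by
  obtain ⟨_, _, _, _, _, _, _, _, _, _, hfbb, _, _, _, _, _, _, _, hbff, _⟩ := hrel
  exact bp_action_beta_general hfbb hbff vac hm hn1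
end
end
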